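/- Let j ≥ 0 be an integer. For every z ∈ ℂ with Re z > −1: K_j(z) = Q_j(z) + Σ_{r=0}^{j−1} C(j,r)·z^{j−r}·ζ'(−r) − (z^{j+1}/(j+1))·γ + Σ_{k=1}^{∞} [ −(z+k)^{j}·log(1 + z/k) + Σ_{r=0}^{j} C(j,r)·z^{j−r}·Σ_{l=1}^{r+1} ((−1)^{l−1} z^{l}/l)·k^{r−l} ], and the infinite series on the right-hand side converges absolutely. -/

import Mathlib

open scoped BigOperators

noncomputable section

/-- Bernoulli number `B_r` (with `B_1 = -1/2`), as a complex number. -/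
def BC (r : ℕ) : ℂ := ((bernoulli r : ℚ) : ℂ)

/-- Bernoulli polynomial `B_m(x)` evaluated at a complex number. -/
def BPC (m : ℕ) (x : ℂ) : ℂ := Polynomial.aeval x (Polynomial.bernoulli m)

/-- `ζ'`, the derivative of the Riemann zeta function. -/
def zetaD (s : ℂ) : ℂ := deriv riemannZeta s

/-- `φ_{j,r} = (d/dt)^r [t^{j+1} log t/(j+1) − t^{j+1}/(j+1)²]` at `t = 1`. -/
def phiJR (j r : ℕ) : ℝ :=
  iteratedDeriv r (fun t : ℝ => t^(j+1) * Real.log t / (j+1) - t^(j+1) / ((j:ℝ)+1)^2) 1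

/-- The polynomial `P_j(x) = Σ_{r=0}^{j+1} (B_r/r!)·φ_{j,r}·x^{j+1−r}`. -/
def Pj (j : ℕ) (x : ℂ) : ℂ :=
  ∑ r ∈ Finset.range (j+2), BC r / r.factorial * ((phiJR j r : ℝ) : ℂ) * x^(j+1-r)

/-- The polynomial `Q_j(z)`. -/
def Qj (j : ℕ) (z : ℂ) : ℂ :=
  Pj j (z+1) - (∑ r ∈ Finset.range (j+1), (j.choose r : ℂ) * z^r * Pj (j-r) 1)
  + (1/((j:ℂ)+1)) * ∑ r ∈ Finset.Icc 1 (j+1), ((j+1).choose r : ℂ) * BPC (j+1-r) z *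
      ∑ l ∈ Finset.Icc 1 r, (-1:ℂ)^(l-1) * z^l / l

/-- `K_j(z) = (B_{j+1}(z+1)/(j+1))·log(z+1) − ζ'(−j) + P_j(z+1)
+ Σ_{k≥1} [P_j(z+k+1) − P_j(z+k) + (B_{j+1}(z+k+1)/(j+1))·log((z+k+1)/(z+k))]`. -/
def Kj (j : ℕ) (z : ℂ) : ℂ :=
  BPC (j+1) (z+1) / ((j:ℂ)+1) * Complex.log (z+1) - zetaD (-(j:ℂ)) + Pj j (z+1)
  + ∑' k : ℕ, (Pj j (z+(k:ℂ)+2) - Pj j (z+(k:ℂ)+1)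
      + BPC (j+1) (z+(k:ℂ)+2) / ((j:ℂ)+1) * Complex.log ((z+(k:ℂ)+2)/(z+(k:ℂ)+1)))


/-! ### Taylor and Euler–Maclaurin -/

lemma aux_taylor (C : ℝ) (n : ℕ) : ∀ (F : ℕ → ℝ → ℂ),
    (∀ i < n, ∀ t ∈ Set.Icc (0:ℝ) 1, HasDerivAt (F i) (F (i+1) t) t) →
    (∀ t ∈ Set.Icc (0:ℝ) 1, ‖F n t‖ ≤ C) →
    ∀ t ∈ Set.Icc (0:ℝ) 1,
      ‖F 0 t - ∑ i ∈ Finset.range n, F i 0 / (i.factorial : ℂ) * (t:ℂ)^i‖ ≤ C := by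
  induction n with
  | zero => intro F _ hb t ht; simpa using hb t ht
  | succ n ih =>
    intro F hd hb t ht
    have h1 := ih (fun i => F (i+1)) (fun i hi t ht => hd (i+1) (by omega) t ht) hb
    have hder : ∀ u ∈ Set.Icc (0:ℝ) 1, HasDerivWithinAt
        (fun u : ℝ => F 0 u - ∑ i ∈ Finset.range (n+1), F i 0 / (i.factorial : ℂ) * (u:ℂ)^i)
        (F 1 u - ∑ i ∈ Finset.range n, F (i+1) 0 / (i.factorial : ℂ) * (u:ℂ)^i)
        (Set.Icc 0 1) u := by
      intro u hu
      apply HasDerivAt.hasDerivWithinAt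
      apply (hd 0 (by omega) u hu).sub
      simp_rw [Finset.sum_range_succ']
      have : HasDerivAt (fun u : ℝ => ∑ i ∈ Finset.range n,
          F (i+1) 0 / ((i+1).factorial : ℂ) * (u:ℂ)^(i+1))
          (∑ i ∈ Finset.range n, F (i+1) 0 / (i.factorial : ℂ) * (u:ℂ)^i) u := by
        apply HasDerivAt.fun_sum
        intro i _
        have h := ((Complex.ofRealCLM.hasDerivAt (x := u)).pow (i+1)).const_mul
          (F (i+1) 0 / ((i+1).factorial : ℂ))
        convert! h using 1
        have : (i.factorial : ℂ) ≠ 0 := by exact_mod_cast i.factorial_ne_zero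
        have : (i:ℂ) + 1 ≠ 0 := by exact_mod_cast i.succ_ne_zero
        simp [Nat.factorial_succ]
        field_simp
      simpa using this.add_const (F 0 0 / ((Nat.factorial 0 : ℕ) : ℂ) * (u:ℂ)^0)
    have hC : 0 ≤ C := (norm_nonneg _).trans (hb 0 (by simp))
    have h2 := Convex.norm_image_sub_le_of_norm_hasDerivWithin_le hder
      (fun u hu => h1 u hu) (convex_Icc 0 1) (x := 0) (y := t) (by simp) ht
    have h3 : F 0 0 - ∑ i ∈ Finset.range (n+1),
        F i 0 / (i.factorial : ℂ) * ((0:ℝ):ℂ)^i = 0 := by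
      simp [Finset.sum_range_succ']
    rw [h3, sub_zero] at h2
    refine h2.trans ?_
    rw [sub_zero, Real.norm_eq_abs, abs_of_nonneg ht.1]
    nlinarith [ht.2]

def cc : ℕ → ℂ → ℂ
  | 0, s => 1 / (1 - s)
  | (r+1), s => cc r s * (1 - s - r)

def FF (r : ℕ) (s w : ℂ) : ℂ := cc r s * w ^ (1 - s - r)

lemma FF_deriv (r : ℕ) (s w : ℂ) (hw : w ∈ Complex.slitPlane) :
    HasDerivAt (FF r s) (FF (r+1) s w) w := by
  have := ((hasDerivAt_id w).cpow_const (c := 1 - s - r) hw).const_mul (cc r s)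
  convert! this using 1
  simp only [FF, cc, id]
  push_cast
  rw [sub_sub (1 - s)]
  ring

def EE (j : ℕ) (s w : ℂ) : ℂ := ∑ r ∈ Finset.range (j+2), BC r / r.factorial * FF r s w

def DD (j : ℕ) (s w : ℂ) : ℂ := EE j s (w+1) - EE j s w - w ^ (-s)

lemma FF_one (s w : ℂ) (hs : s ≠ 1) : FF 1 s w = w ^ (-s) := by
  have : 1 - s ≠ 0 := sub_ne_zero.mpr (Ne.symm hs)
  simp [FF, cc, this]

lemma EM_alg (j : ℕ) (f : ℕ → ℂ) :
    ∑ r ∈ Finset.range (j+2), BC r / r.factorial *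
      ∑ i ∈ Finset.range (j+3-r), f (r+i) / (i.factorial : ℂ)
    = ∑ r ∈ Finset.range (j+2), BC r / r.factorial * f r + f 1 := by
  have h1 : ∀ r ∈ Finset.range (j+2), BC r / r.factorial *
      ∑ i ∈ Finset.range (j+3-r), f (r+i) / (i.factorial : ℂ)
      = BC r / r.factorial * f r + ∑ i ∈ Finset.range (j+2-r), 
        BC r / r.factorial * (f (r+i+1) / ((i+1).factorial : ℂ)) := by
    intro r hr
    have : r < j+2 := Finset.mem_range.mp hr
    rw [show j+3-r = (j+2-r)+1 by omega, Finset.sum_range_succ', mul_add, Finset.mul_sum]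
    simp [add_comm, add_assoc]
  rw [Finset.sum_congr rfl h1, Finset.sum_add_distrib]
  congr 1
  have h2 : ∀ n ∈ Finset.range (j+2), ∑ r ∈ Finset.range (n+1),
      BC r / r.factorial * (f (n+1) / ((n-r+1).factorial : ℂ)) = if n = 0 then f 1 else 0 := by
    intro n _
    have h := sum_bernoulli (n+1)
    have h' : ∑ k ∈ Finset.range (n+1), (((n+1).choose k : ℕ) : ℂ) * BC k
        = if n = 0 then 1 else 0 := by
      have := congrArg (fun q : ℚ => (q:ℂ)) h
      simp only [BC]
      push_cast at this
      rw [this]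
      by_cases h0 : n = 0 <;> simp [h0]
    have : ∀ r ∈ Finset.range (n+1), BC r / r.factorial * (f (n+1) / ((n-r+1).factorial : ℂ))
       = ((((n+1).choose r : ℕ) : ℂ) * BC r) * (f (n+1) / ((n+1).factorial : ℂ)) := by
      intro r hr
      have hr' : r ≤ n := by have := Finset.mem_range.mp hr; omega
      rw [Nat.cast_choose ℂ (show r ≤ n+1 by omega), show n+1-r = n-r+1 by omega]
      have a1 : (r.factorial : ℂ) ≠ 0 := by exact_mod_cast r.factorial_ne_zero
      have a2 : ((n+1).factorial : ℂ) ≠ 0 := by exact_mod_cast (n+1).factorial_ne_zero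
      have a3 : ((n-r+1).factorial : ℂ) ≠ 0 := by exact_mod_cast (n-r+1).factorial_ne_zero
      field_simp
    rw [Finset.sum_congr rfl this, ← Finset.sum_mul, h']
    split_ifs with h0
    · subst h0; simp
    · simp
  have h3 : ∑ n ∈ Finset.range (j+2), ∑ r ∈ Finset.range (n+1),
      BC r / r.factorial * (f (n+1) / ((n-r+1).factorial : ℂ)) = f 1 := by
    rw [Finset.sum_congr rfl h2]; simp
  rw [← h3, Finset.sum_sigma', Finset.sum_sigma']
  refine Finset.sum_bij' (fun x _ => ⟨x.1 + x.2, x.1⟩) (fun x _ => ⟨x.2, x.1 - x.2⟩) ?_ ?_ ?_ ?_ ?_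
  · rintro ⟨a, b⟩ h; simp at h ⊢; omega
  · rintro ⟨a, b⟩ h; simp at h ⊢; omega
  · rintro ⟨a, b⟩ h; simp
  · rintro ⟨a, b⟩ h; simp at h ⊢; omega
  · rintro ⟨a, b⟩ h; simp

lemma DD_bound (j : ℕ) (s w : ℂ) (hs : s ≠ 1) (hw : 0 < w.re) (M : ℝ)
    (hM : ∀ t ∈ Set.Icc (0:ℝ) 1, ‖FF (j+3) s (w + t)‖ ≤ M) :
    ‖DD j s w‖ ≤ (∑ r ∈ Finset.range (j+2), ‖BC r / (r.factorial : ℂ)‖) * M := by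
  have key : DD j s w = ∑ r ∈ Finset.range (j+2), BC r / r.factorial *
      (FF r s (w+1) - ∑ i ∈ Finset.range (j+3-r), FF (r+i) s w / (i.factorial : ℂ)) := by
    simp_rw [mul_sub]
    rw [Finset.sum_sub_distrib, EM_alg j (fun r => FF r s w), FF_one s w hs, DD, EE, EE]
    ring
  rw [key, Finset.sum_mul]
  refine (norm_sum_le _ _).trans (Finset.sum_le_sum fun r hr => ?_)
  have hr' : r < j+2 := Finset.mem_range.mp hr
  rw [norm_mul]
  refine mul_le_mul_of_nonneg_left ?_ (norm_nonneg _)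
  have := aux_taylor M (j+3-r) (fun i t => FF (r+i) s (w+t)) ?_ ?_ 1 (by simp)
  · simpa using this
  · intro i _ t ht
    have h1 : w + t ∈ Complex.slitPlane := by
      left; simp; linarith [ht.1]
    have h2 := FF_deriv (r+i) s (w+t) h1
    have h3 : HasDerivAt (fun t : ℝ => w + (t:ℂ)) 1 t := by
      simpa using (Complex.ofRealCLM.hasDerivAt (x := t)).const_add w
    have := HasDerivAt.comp t h2 h3
    rw [mul_one] at this
    exact this
  · intro t ht
    have : r + (j+3-r) = j+3 := by omega
    simp only [this]
    exact hM t ht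

def UU (j : ℕ) : Set ℂ :=
  ({s : ℂ | -(j:ℝ) - 1/2 < s.re} ∩ Metric.ball 0 ((j:ℝ)+5)) ∩
    (({s : ℂ | s.re < 1} ∪ {s : ℂ | 0 < s.im}) ∪ {s : ℂ | 1 < s.re})

lemma UU_open (j : ℕ) : IsOpen (UU j) := by
  have h1 := isOpen_lt (continuous_const (y := -(j:ℝ) - 1/2)) Complex.continuous_re
  have h2 := isOpen_lt Complex.continuous_re (continuous_const (y := (1:ℝ)))
  have h3 := isOpen_lt (continuous_const (y := (0:ℝ))) Complex.continuous_im
  have h4 := isOpen_lt (continuous_const (y := (1:ℝ))) Complex.continuous_re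
  exact (h1.inter Metric.isOpen_ball).inter ((h2.union h3).union h4)

lemma UU_ne (j : ℕ) {s : ℂ} (hs : s ∈ UU j) : s ≠ 1 := by
  rintro rfl
  have := hs.2
  simp at this

lemma UU_preconn (j : ℕ) : IsPreconnected (UU j) := by
  unfold UU
  have h0 : Convex ℝ ({s : ℂ | -(j:ℝ) - 1/2 < s.re} ∩ Metric.ball 0 ((j:ℝ)+5)) :=
    (convex_halfSpace_re_gt _).inter (convex_ball _ _)
  rw [Set.inter_union_distrib_left, Set.inter_union_distrib_left]
  have hn1 : ‖(Complex.I : ℂ)‖ < (j:ℝ) + 5 := by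
    have : (0:ℝ) ≤ j := by positivity
    simp; linarith
  have hn2 : ‖(2 + Complex.I : ℂ)‖ < (j:ℝ) + 5 := by
    refine (norm_add_le _ _).trans_lt ?_
    simp; have : (0:ℝ) ≤ j := by positivity
    linarith
  have hj : (0:ℝ) ≤ j := by positivity
  refine IsPreconnected.union (2 + Complex.I) (Or.inr ?_) ?_
    (IsPreconnected.union (Complex.I) ?_ ?_
      (h0.inter (convex_halfSpace_re_lt 1)).isPreconnected
      (h0.inter (convex_halfSpace_im_gt 0)).isPreconnected)
    (h0.inter (convex_halfSpace_re_gt 1)).isPreconnected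
  · refine ⟨⟨?_, by simpa using hn2⟩, ?_⟩ <;> simp <;> linarith
  · refine ⟨⟨?_, by simpa using hn2⟩, ?_⟩ <;> simp <;> linarith
  · refine ⟨⟨?_, by simpa using hn1⟩, ?_⟩ <;> simp <;> linarith
  · refine ⟨⟨?_, by simpa using hn1⟩, ?_⟩ <;> simp <;> linarith

lemma cc_bound (R : ℝ) (n : ℕ) :
    ∃ C : ℝ, 0 ≤ C ∧ ∀ s : ℂ, s ≠ 1 → ‖s‖ < R → ‖cc (n+1) s‖ ≤ C := by
  induction n with
  | zero =>
    refine ⟨1, zero_le_one, fun s hs _ => ?_⟩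
    have : 1 - s ≠ 0 := sub_ne_zero.mpr (Ne.symm hs)
    simp [cc, this]
  | succ n ih =>
    obtain ⟨C, hC, h⟩ := ih
    refine ⟨C * (1 + |R| + (n+1)), by positivity, fun s hs hR => ?_⟩
    rw [cc, norm_mul]
    refine mul_le_mul (h s hs hR) ?_ (norm_nonneg _) hC
    refine (norm_sub_le _ _).trans (add_le_add ((norm_sub_le _ _).trans ?_) ?_)
    · simp; exact hR.le.trans (le_abs_self R)
    · rw [Complex.norm_natCast]; push_cast; rfl

lemma DD_summable_bound (j : ℕ) (x : ℂ) (hx : 0 < x.re) :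
    ∃ u : ℕ → ℝ, Summable u ∧ ∀ (k : ℕ) (s : ℂ), s ∈ UU j → ‖DD j s (x + k)‖ ≤ u k := by
  obtain ⟨C, hC, hcc⟩ := cc_bound ((j:ℝ)+5) (j+2)
  set δ := x.re with hδ
  set d := min δ 1 with hd
  have hd0 : 0 < d := lt_min hx zero_lt_one
  have hd1 : d ≤ 1 := min_le_right _ _
  set S := ∑ r ∈ Finset.range (j+2), ‖BC r / (r.factorial : ℂ)‖
  set A := C * (d ^ (-(2*(j:ℝ)+7)) * Real.exp (Real.pi * ((j:ℝ)+5))) with hA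
  refine ⟨fun k => S * (A * (1 / |(k:ℝ) + δ| ^ (3/2 : ℝ))), ?_, ?_⟩
  · exact (((Real.summable_one_div_nat_add_rpow δ (3/2)).mpr (by norm_num)).mul_left A).mul_left S
  intro k s hs
  have hs1 := UU_ne j hs
  have hsre : -(j:ℝ) - 1/2 < s.re := hs.1.1
  have hsn : ‖s‖ < (j:ℝ)+5 := by simpa using hs.1.2
  have hk : (0:ℝ) ≤ k := by positivity
  refine DD_bound j s (x+k) hs1 (by simp; linarith) _ ?_
  intro t ht
  rw [FF, norm_mul, hA, mul_assoc]
  refine mul_le_mul (hcc s hs1 hsn) ?_ (norm_nonneg _) hC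
  set w : ℂ := x + k + t with hw
  have hwre : w.re = δ + k + t := by simp [hw, hδ]
  have hnw : (k:ℝ) + δ ≤ ‖w‖ := by
    have := Complex.re_le_norm w
    linarith [ht.1]
  have hdw : d ≤ ‖w‖ := by
    have : d ≤ δ := min_le_left _ _
    linarith
  have hw0 : 0 < ‖w‖ := hd0.trans_le hdw
  set e : ℝ := (1 - s - ((j+3:ℕ):ℂ)).re with he
  have he' : e = -(j:ℝ) - 2 - s.re := by simp [he]; ring
  have hre : s.re < (j:ℝ)+5 := (Complex.re_le_norm s).trans_lt hsn
  refine (Complex.norm_cpow_le _ _).trans ?_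
  rw [div_eq_mul_inv, ← Real.exp_neg]
  have h1 : ‖w‖ ^ e ≤ d ^ (-(2*(j:ℝ)+7)) * (1 / |(k:ℝ) + δ| ^ (3/2 : ℝ)) := by
    have e1 : ‖w‖ ^ e = ‖w‖ ^ (e + 3/2) * ‖w‖ ^ (-(3/2) : ℝ) := by
      rw [← Real.rpow_add hw0]; ring_nf
    rw [e1]
    refine mul_le_mul ?_ ?_ (by positivity) (by positivity)
    · calc ‖w‖ ^ (e + 3/2) ≤ d ^ (e + 3/2) :=
            Real.rpow_le_rpow_of_nonpos hd0 hdw (by linarith)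
        _ ≤ _ := Real.rpow_le_rpow_of_exponent_ge hd0 hd1 (by linarith)
    · rw [Real.rpow_neg hw0.le, ← one_div, abs_of_pos (by linarith)]
      refine one_div_le_one_div_of_le (Real.rpow_pos_of_pos (by linarith) _) ?_
      exact Real.rpow_le_rpow (by linarith) hnw (by norm_num)
  have h2 : Real.exp (-(w.arg * (1 - s - ((j+3:ℕ):ℂ)).im)) ≤ Real.exp (Real.pi * ((j:ℝ)+5)) := by
    apply Real.exp_le_exp.mpr
    refine (le_abs_self _).trans ?_
    rw [abs_neg, abs_mul]
    refine mul_le_mul (Complex.abs_arg_le_pi w) ?_ (abs_nonneg _) Real.pi_pos.le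
    have := Complex.abs_im_le_norm s
    simp
    linarith
  calc _ ≤ _ := mul_le_mul h1 h2 (Real.exp_pos _).le (by positivity)
    _ = _ := by ring

lemma cc_diff (r : ℕ) (s : ℂ) (hs : s ≠ 1) : DifferentiableAt ℂ (cc r) s := by
  have h1 : 1 - s ≠ 0 := sub_ne_zero.mpr (Ne.symm hs)
  induction r with
  | zero =>
    change DifferentiableAt ℂ (fun s => 1 / (1 - s)) s
    fun_prop (disch := assumption)
  | succ r ih =>
    change DifferentiableAt ℂ (fun s => cc r s * (1 - s - r)) s
    fun_prop

lemma FF_diff (r : ℕ) (s w : ℂ) (hs : s ≠ 1) (hw : w ≠ 0) :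
    DifferentiableAt ℂ (fun s => FF r s w) s := by
  unfold FF
  refine (cc_diff r s hs).mul ?_
  exact DifferentiableAt.const_cpow (by fun_prop) (Or.inl hw)

lemma EE_diff (j : ℕ) (s w : ℂ) (hs : s ≠ 1) (hw : w ≠ 0) :
    DifferentiableAt ℂ (fun s => EE j s w) s := by
  unfold EE
  refine DifferentiableAt.fun_sum fun r _ => ?_
  exact (FF_diff r s w hs hw).const_mul _

lemma DD_diff (j : ℕ) (s w : ℂ) (hs : s ≠ 1) (hw : w ≠ 0) (hw' : w + 1 ≠ 0) :
    DifferentiableAt ℂ (fun s => DD j s w) s := by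
  unfold DD
  refine ((EE_diff j s _ hs hw').sub (EE_diff j s _ hs hw)).sub ?_
  exact DifferentiableAt.const_cpow (by fun_prop) (Or.inl hw)

/-! ### derivative at `-j` -/

def aa (j : ℕ) : ℕ → ℝ
  | 0 => 1 / ((j:ℝ)+1)
  | (r+1) => aa j r * ((j:ℝ)+1-r)

def bb (j : ℕ) : ℕ → ℝ
  | 0 => - (1 / ((j:ℝ)+1)^2)
  | (r+1) => bb j r * ((j:ℝ)+1-r) + aa j r

lemma cc_at (j r : ℕ) : cc r (-(j:ℂ)) = (aa j r : ℂ) := by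
  induction r with
  | zero => simp [cc, aa, add_comm]
  | succ r ih => simp [cc, aa, ih, add_comm]

lemma j_ne (j : ℕ) : (j:ℂ) + 1 ≠ 0 := by exact_mod_cast j.succ_ne_zero

lemma cc_hasDeriv (j r : ℕ) : HasDerivAt (cc r) (-(bb j r : ℂ)) (-(j:ℂ)) := by
  induction r with
  | zero =>
    change HasDerivAt (fun s : ℂ => 1 / (1 - s)) _ _
    have h1 : (1:ℂ) - (-(j:ℂ)) ≠ 0 := by rw [sub_neg_eq_add, add_comm]; exact j_ne j
    have := ((hasDerivAt_id (-(j:ℂ))).const_sub 1).inv h1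
    simp only [one_div]
    convert! this using 1
    simp [bb]
    rw [add_comm]
  | succ r ih =>
    change HasDerivAt (fun s : ℂ => cc r s * (1 - s - r)) _ _
    have := ih.mul (((hasDerivAt_id (-(j:ℂ))).const_sub 1).sub_const (r:ℂ))
    convert! this using 1
    rw [cc_at]
    simp [bb]
    ring

lemma phi_aux (j r : ℕ) : ∀ t : ℝ, 0 < t →
    iteratedDeriv r (fun t : ℝ => t^(j+1) * Real.log t / (j+1) - t^(j+1) / ((j:ℝ)+1)^2) t
      = t ^ ((j:ℤ)+1-r) * (aa j r * Real.log t + bb j r) := by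
  induction r with
  | zero =>
    intro t ht
    have : t ^ ((j:ℤ)+1) = t^(j+1) := by exact_mod_cast zpow_natCast t (j+1)
    simp [aa, bb, this]
    ring
  | succ r ih =>
    intro t ht
    rw [iteratedDeriv_succ]
    have hev : iteratedDeriv r (fun t : ℝ => t^(j+1) * Real.log t / (j+1)
        - t^(j+1) / ((j:ℝ)+1)^2) =ᶠ[nhds t]
        fun t => t ^ ((j:ℤ)+1-r) * (aa j r * Real.log t + bb j r) := by
      filter_upwards [lt_mem_nhds ht] with u hu using ih u hu
    rw [hev.deriv_eq]
    have := (hasDerivAt_zpow ((j:ℤ)+1-r) t (Or.inl ht.ne')).mul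
      (((Real.hasDerivAt_log ht.ne').const_mul (aa j r)).add_const (bb j r))
    refine (this.deriv).trans ?_
    have h2 : t ^ ((j:ℤ)+1-r) = t ^ ((j:ℤ)+1-(r+1:ℕ)) * t := by
      rw [← zpow_add_one₀ ht.ne']; congr 1; push_cast; ring
    rw [h2, show (j:ℤ)+1-r-1 = (j:ℤ)+1-(r+1:ℕ) by push_cast; ring]
    simp only [aa, bb]
    push_cast
    field_simp
    ring

lemma phi_eq (j r : ℕ) : phiJR j r = bb j r := by
  rw [phiJR, phi_aux j r 1 one_pos]; simp

lemma aa_eq (j r : ℕ) (hr : r ≤ j+1) :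
    aa j r = ((j+1).descFactorial r : ℝ) / ((j:ℝ)+1) := by
  induction r with
  | zero => simp [aa]
  | succ r ih =>
    rw [aa, ih (by omega), Nat.descFactorial_succ, Nat.cast_mul, Nat.cast_sub (by omega)]
    push_cast; ring

lemma BPC_eq (n : ℕ) (w : ℂ) :
    BPC n w = ∑ r ∈ Finset.range (n+1), BC r * (n.choose r : ℂ) * w^(n-r) := by
  rw [BPC, Polynomial.bernoulli, map_sum]
  refine Finset.sum_congr rfl fun r _ => ?_
  rw [Polynomial.aeval_monomial]
  simp [BC]

def LL (j : ℕ) (w : ℂ) : ℂ := Pj j w + BPC (j+1) w / ((j:ℂ)+1) * Complex.log w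

lemma EE_hasDeriv (j : ℕ) (w : ℂ) (hw : w ≠ 0) :
    HasDerivAt (fun s => EE j s w) (-LL j w) (-(j:ℂ)) := by
  have key : -LL j w = ∑ r ∈ Finset.range (j+2), BC r / r.factorial *
      (-(w^(j+1-r) * ((aa j r : ℂ) * Complex.log w + (bb j r : ℂ)))) := by
    rw [LL, Pj, BPC_eq, Finset.sum_div, Finset.sum_mul, ← Finset.sum_add_distrib,
      ← Finset.sum_neg_distrib]
    refine Finset.sum_congr rfl fun r hr => ?_
    have hr' : r ≤ j+1 := by have := Finset.mem_range.mp hr; omega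
    rw [phi_eq, aa_eq j r hr', Nat.descFactorial_eq_factorial_mul_choose]
    have := j_ne j
    have a1 : (r.factorial : ℂ) ≠ 0 := by exact_mod_cast r.factorial_ne_zero
    push_cast
    field_simp
    ring
  rw [key]
  unfold EE
  refine HasDerivAt.fun_sum fun r hr => ?_
  have hr' : r ≤ j+1 := by have := Finset.mem_range.mp hr; omega
  refine HasDerivAt.const_mul _ ?_
  unfold FF
  have h1 : HasDerivAt (fun s : ℂ => 1 - s - (r:ℂ)) (-1) (-(j:ℂ)) :=
    ((hasDerivAt_id (-(j:ℂ))).const_sub 1).sub_const (r:ℂ)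
  have := (cc_hasDeriv j r).mul (h1.const_cpow (c := w) (Or.inl hw))
  convert! this using 1
  have h2 : w ^ ((1:ℂ) - (-(j:ℂ)) - r) = w ^ (j+1-r) := by
    rw [← Complex.cpow_natCast, Nat.cast_sub hr']; congr 1; push_cast; ring
  rw [h2, cc_at]
  ring

lemma DD_hasDeriv (j : ℕ) (w : ℂ) (hw : w ≠ 0) (hw' : w + 1 ≠ 0) :
    HasDerivAt (fun s => DD j s w) (-(LL j (w+1) - LL j w - w^j * Complex.log w)) (-(j:ℂ)) := by
  unfold DD
  have := ((EE_hasDeriv j (w+1) hw').sub (EE_hasDeriv j w hw)).sub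
    ((hasDerivAt_neg (-(j:ℂ))).const_cpow (c := w) (Or.inl hw))
  convert! this using 1
  rw [neg_neg, Complex.cpow_natCast]
  ring

lemma UU_mem (j : ℕ) : -(j:ℂ) ∈ UU j := by
  have hj : (0:ℝ) ≤ j := by positivity
  refine ⟨⟨?_, ?_⟩, Or.inl (Or.inl ?_)⟩
  · simp
  · simp
  · simp; linarith

lemma xk_ne {x : ℂ} (hx : 0 < x.re) (k : ℕ) : x + k ≠ 0 := by
  intro h
  have := congrArg Complex.re h
  simp at this
  have hk : (0:ℝ) ≤ k := by positivity
  linarith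

lemma hasSum_LL (j : ℕ) (x : ℂ) (hx : 0 < x.re) :
    HasSum (fun k : ℕ => LL j (x+k+1) - LL j (x+k) - (x+k)^j * Complex.log (x+k))
      (-(deriv (fun s => ∑' k : ℕ, DD j s (x+k)) (-(j:ℂ)))) := by
  obtain ⟨u, hu, hb⟩ := DD_summable_bound j x hx
  have hne := xk_ne hx
  have hne' : ∀ k : ℕ, x + k + 1 ≠ 0 := fun k => by
    have := hne (k+1); push_cast at this; rwa [← add_assoc] at this
  have := Complex.hasSum_deriv_of_summable_norm hu (F := fun (k:ℕ) s => DD j s (x+k))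
    (fun k s hs => (DD_diff j s _ (UU_ne j hs) (hne k) (hne' k)).differentiableWithinAt)
    (UU_open j) hb (UU_mem j)
  have h2 := this.neg
  convert! h2 using 2 with k
  rw [(DD_hasDeriv j _ (hne k) (hne' k)).deriv, neg_neg]

lemma FF_tendsto (r : ℕ) (s : ℂ) (hs : 1 < s.re) :
    Filter.Tendsto (fun N : ℕ => FF r s (1 + N)) Filter.atTop (nhds 0) := by
  unfold FF
  rw [← mul_zero (cc r s)]
  refine Filter.Tendsto.const_mul _ ?_
  rw [tendsto_zero_iff_norm_tendsto_zero]
  have h : ∀ N : ℕ, ‖(1 + (N:ℂ)) ^ (1 - s - (r:ℂ))‖ = ((1:ℝ) + N) ^ (-(s.re - 1 + r)) := by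
    intro N
    have : (1 + (N:ℂ)) = (((1:ℝ) + N : ℝ) : ℂ) := by push_cast; rfl
    rw [this, Complex.norm_cpow_eq_rpow_re_of_pos (by positivity)]
    congr 1
    simp; ring
  simp_rw [h]
  have hr : (0:ℝ) ≤ r := by positivity
  refine (tendsto_rpow_neg_atTop (by linarith : 0 < s.re - 1 + r)).comp ?_
  exact Filter.tendsto_atTop_add_const_left _ _ tendsto_natCast_atTop_atTop

lemma EE_tendsto (j : ℕ) (s : ℂ) (hs : 1 < s.re) :
    Filter.Tendsto (fun N : ℕ => EE j s (1 + N)) Filter.atTop (nhds 0) := by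
  unfold EE
  have : (0:ℂ) = ∑ r ∈ Finset.range (j+2), BC r / r.factorial * 0 := by simp
  rw [this]
  exact tendsto_finsetSum _ fun r _ => (FF_tendsto r s hs).const_mul _

lemma zeta_right (j : ℕ) (s : ℂ) (hU : s ∈ UU j) (hs : 1 < s.re) :
    riemannZeta s = - EE j s 1 - ∑' k : ℕ, DD j s (1+k) := by
  obtain ⟨u, hu, hb⟩ := DD_summable_bound j 1 (by simp)
  have hD : Summable (fun k : ℕ => DD j s (1+k)) :=
    Summable.of_norm_bounded hu fun k => hb k s hU
  have h1 := hD.hasSum.tendsto_sum_nat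
  have hz : Summable (fun k : ℕ => 1 / ((k:ℂ)+1)^s) := by
    have := (Complex.summable_one_div_nat_cpow (p := s)).mpr hs
    have := (summable_nat_add_iff 1).mpr this
    simpa using this
  have h2 := hz.hasSum.tendsto_sum_nat
  rw [← zeta_eq_tsum_one_div_nat_add_one_cpow hs] at h2
  have h3 := ((EE_tendsto j s hs).sub_const (EE j s 1)).sub h1
  have h4 : ∀ N : ℕ, EE j s (1 + N) - EE j s 1 - ∑ k ∈ Finset.range N, DD j s (1+k)
      = ∑ k ∈ Finset.range N, 1 / ((k:ℂ)+1)^s := by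
    intro N
    have := Finset.sum_range_sub (fun k : ℕ => EE j s (1 + k)) N
    simp only [Nat.cast_zero, add_zero] at this
    rw [← this, ← Finset.sum_sub_distrib]
    refine Finset.sum_congr rfl fun k _ => ?_
    rw [DD, Complex.cpow_neg]
    push_cast
    rw [← add_assoc, add_comm (k:ℂ) 1]
    ring
  simp_rw [h4] at h3
  rw [tendsto_nhds_unique h2 h3]
  ring

lemma zeta_eq (j : ℕ) : Set.EqOn riemannZeta
    (fun s => - EE j s 1 - ∑' k : ℕ, DD j s (1+k)) (UU j) := by
  obtain ⟨u, hu, hb⟩ := DD_summable_bound j 1 (by simp)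
  have hne := xk_ne (x := 1) (by simp)
  have hne' : ∀ k : ℕ, (1:ℂ) + k + 1 ≠ 0 := fun k => by
    have := hne (k+1); push_cast at this; rwa [← add_assoc] at this
  have hd := Complex.differentiableOn_tsum_of_summable_norm hu
    (F := fun (k:ℕ) s => DD j s (1+k))
    (fun k s hs => (DD_diff j s _ (UU_ne j hs) (hne k) (hne' k)).differentiableWithinAt)
    (UU_open j) hb
  have hd2 : DifferentiableOn ℂ (fun s => - EE j s 1 - ∑' k : ℕ, DD j s (1+k)) (UU j) := by
    refine DifferentiableOn.sub (fun s hs => ?_) hd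
    exact (EE_diff j s 1 (UU_ne j hs) one_ne_zero).neg.differentiableWithinAt
  have hd1 : DifferentiableOn ℂ riemannZeta (UU j) := fun s hs =>
    (differentiableAt_riemannZeta (UU_ne j hs)).differentiableWithinAt
  have hj : (0:ℝ) ≤ j := by positivity
  have h2 : (2:ℂ) ∈ UU j := by
    refine ⟨⟨?_, ?_⟩, Or.inr ?_⟩
    · simp; linarith
    · simp; linarith
    · simp
  refine (hd1.analyticOnNhd (UU_open j)).eqOn_of_preconnected_of_eventuallyEq
    (hd2.analyticOnNhd (UU_open j)) (UU_preconn j) h2 ?_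
  have h4 := (isOpen_lt (continuous_const (y := (1:ℝ))) Complex.continuous_re).mem_nhds
    (show (2:ℂ) ∈ {s : ℂ | 1 < s.re} by simp)
  filter_upwards [(UU_open j).mem_nhds h2, h4] with s hs hs'
  exact zeta_right j s hs hs'

lemma zetaD_eq (j : ℕ) :
    HasSum (fun k : ℕ => LL j (1+k+1) - LL j (1+k) - (1+(k:ℂ))^j * Complex.log (1+k))
      (zetaD (-(j:ℂ)) - LL j 1) := by
  have h := hasSum_LL j 1 (by simp)
  convert! h using 1
  obtain ⟨u, hu, hb⟩ := DD_summable_bound j 1 (by simp)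
  have hne := xk_ne (x := 1) (by simp)
  have hne' : ∀ k : ℕ, (1:ℂ) + k + 1 ≠ 0 := fun k => by
    have := hne (k+1); push_cast at this; rwa [← add_assoc] at this
  have hd := Complex.differentiableOn_tsum_of_summable_norm hu
    (F := fun (k:ℕ) s => DD j s (1+k))
    (fun k s hs => (DD_diff j s _ (UU_ne j hs) (hne k) (hne' k)).differentiableWithinAt)
    (UU_open j) hb
  have hU := (UU_open j).mem_nhds (UU_mem j)
  have h3 := (hd.differentiableAt hU).hasDerivAt
  have h4 := (EE_hasDeriv j 1 one_ne_zero).neg.sub h3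
  have h5 : zetaD (-(j:ℂ)) = _ := ((zeta_eq j).eventuallyEq_of_mem hU).deriv_eq.trans h4.deriv
  rw [h5]
  ring

/-- Limit form. -/
lemma T_tendsto (j : ℕ) (x : ℂ) (S : ℂ)
    (h : HasSum (fun k : ℕ => LL j (x+k+1) - LL j (x+k) - (x+k)^j * Complex.log (x+k)) S) :
    Filter.Tendsto (fun N : ℕ => LL j (x+N) - ∑ k ∈ Finset.range N, (x+k)^j * Complex.log (x+k))
      Filter.atTop (nhds (S + LL j x)) := by
  have h1 := h.tendsto_sum_nat.add_const (LL j x)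
  refine h1.congr fun N => ?_
  rw [Finset.sum_sub_distrib]
  have := Finset.sum_range_sub (fun k : ℕ => LL j (x + k)) N
  simp only [Nat.cast_zero, add_zero, Nat.cast_add, Nat.cast_one, ← add_assoc] at this
  rw [this]
  ring

lemma log_div_re {a b : ℂ} (ha : 0 < a.re) (hb : 0 < b.re) :
    Complex.log (a / b) = Complex.log a - Complex.log b := by
  have ha0 : a ≠ 0 := by rintro rfl; simp at ha
  have hb0 : b ≠ 0 := by rintro rfl; simp at hb
  have h1 := Complex.abs_arg_lt_pi_div_two_iff.mpr (Or.inl ha)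
  have h2 := Complex.abs_arg_lt_pi_div_two_iff.mpr (Or.inl hb)
  rw [abs_lt] at h1 h2
  have hbs : b.arg ≠ Real.pi := by have := Real.pi_pos; linarith [h2.2]
  rw [div_eq_mul_inv, Complex.log_mul ha0 (inv_ne_zero hb0), Complex.log_inv _ hbs]
  · ring
  · rw [Complex.arg_inv, if_neg hbs]
    constructor <;> linarith [h1.1, h1.2, h2.1, h2.2]

lemma BPC_succ (n : ℕ) (w : ℂ) : BPC (n+1) (w+1) = BPC (n+1) w + ((n:ℂ)+1) * w^n := by
  have := congrArg (Polynomial.aeval w) (Polynomial.bernoulli_comp_one_add_X (n+1))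
  rw [Polynomial.aeval_comp] at this
  simp only [BPC]
  simpa [add_comm] using this

lemma Kj_tendsto (j : ℕ) (z : ℂ) (hz : -1 < z.re) :
    Filter.Tendsto (fun N : ℕ => LL j (z+1+N) -
      ∑ k ∈ Finset.range N, (z+1+k)^j * Complex.log (z+1+k))
      Filter.atTop (nhds (Kj j z + zetaD (-(j:ℂ)))) := by
  have hx : 0 < (z+1).re := by simp; linarith
  have h := hasSum_LL j (z+1) hx
  have h2 := T_tendsto j (z+1) _ h
  convert! h2 using 2
  rw [← h.tsum_eq, Kj, LL]
  have : ∀ k : ℕ, Pj j (z+(k:ℂ)+2) - Pj j (z+(k:ℂ)+1)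
      + BPC (j+1) (z+(k:ℂ)+2) / ((j:ℂ)+1) * Complex.log ((z+(k:ℂ)+2)/(z+(k:ℂ)+1))
      = LL j (z+1+k+1) - LL j (z+1+k) - (z+1+k)^j * Complex.log (z+1+k) := by
    intro k
    have hk : (0:ℝ) ≤ k := by positivity
    have e1 : z + (k:ℂ) + 1 = z+1+k := by ring
    have e2 : z + (k:ℂ) + 2 = z+1+k+1 := by ring
    have := j_ne j
    rw [e1, e2, log_div_re (by simp; linarith) (by simp; linarith), LL, LL, BPC_succ]
    field_simp
    ring
  simp_rw [this]
  ring

/-! ### The logarithm's Taylor polynomial -/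

def ell (n : ℕ) (u : ℂ) : ℂ := ∑ l ∈ Finset.Icc 1 n, (-1:ℂ)^(l-1) * u^l / l

lemma ell_eq (n : ℕ) (u : ℂ) : ell n u = Complex.logTaylor (n+1) u := by
  induction n with
  | zero => simp [ell, Complex.logTaylor]
  | succ n ih =>
    have : ell (n+1) u = ell n u + (-1:ℂ)^n * u^(n+1) / ((n+1:ℕ):ℂ) := by
      unfold ell
      rw [Finset.sum_Icc_succ_top (by omega)]
      simp
    rw [this, ih, Complex.logTaylor_succ (n+1)]
    simp [pow_add]

lemma ell_bound (n : ℕ) (u : ℂ) (hu : ‖u‖ ≤ 1/2) :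
    ‖Complex.log (1+u) - ell n u‖ ≤ 2 * ‖u‖^(n+1) := by
  rw [ell_eq]
  refine (Complex.norm_log_sub_logTaylor_le n (by linarith)).trans ?_
  have h1 : (1 - ‖u‖)⁻¹ ≤ 2 := by
    rw [inv_le_comm₀ (by linarith) (by norm_num)]; linarith
  have h2 : (1:ℝ) ≤ (n:ℝ)+1 := by have : (0:ℝ) ≤ n := by positivity
                                  linarith
  refine (div_le_self (mul_nonneg (by positivity) (inv_nonneg.mpr (by linarith))) h2).trans ?_
  rw [mul_comm]
  exact mul_le_mul_of_nonneg_right h1 (by positivity)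

lemma ev_small (z : ℂ) : ∀ᶠ k : ℕ in Filter.atTop, ‖z / (1 + (k:ℂ))‖ ≤ 1/2 := by
  filter_upwards [Filter.eventually_ge_atTop (Nat.ceil (2*‖z‖))] with k hk
  have h1 : 2*‖z‖ ≤ k := Nat.ceil_le.mp hk
  have h2 : ‖(1 + (k:ℂ))‖ = 1 + (k:ℝ) := by
    have : (1 + (k:ℂ)) = ((1+k : ℕ) : ℂ) := by push_cast; rfl
    rw [this, Complex.norm_natCast]; push_cast; rfl
  have hk : (0:ℝ) ≤ k := by positivity
  rw [norm_div, h2, div_le_iff₀ (by linarith)]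
  linarith

lemma m_norm (k : ℕ) : ‖(1 + (k:ℂ))‖ = 1 + (k:ℝ) := by
  have : (1 + (k:ℂ)) = ((1+k : ℕ) : ℂ) := by push_cast; rfl
  rw [this, Complex.norm_natCast]; push_cast; rfl

lemma ell_bound' (z : ℂ) (r d k : ℕ) (h : ‖z / (1 + (k:ℂ))‖ ≤ 1/2) :
    ‖(1+(k:ℂ))^r * (Complex.log (1 + z/(1+k)) - ell (r+d) (z/(1+k)))‖
      ≤ 2 * ‖z‖^(r+d+1) * (1 / (1+(k:ℝ))^(d+1)) := by
  have hk : (0:ℝ) < 1 + (k:ℝ) := by positivity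
  rw [norm_mul, norm_pow, m_norm]
  refine (mul_le_mul_of_nonneg_left (ell_bound (r+d) _ h) (by positivity)).trans_eq ?_
  rw [norm_div, m_norm]
  have : (1+(k:ℝ))^(r+d+1) = (1+(k:ℝ))^r * (1+(k:ℝ))^(d+1) := by ring
  rw [div_pow, this]
  field_simp

lemma ell_summable (z : ℂ) (r : ℕ) :
    Summable (fun k : ℕ => (1+(k:ℂ))^r *
      (Complex.log (1 + z/(1+k)) - ell (r+1) (z/(1+k)))) := by
  have hs : Summable (fun k : ℕ => 2 * ‖z‖^(r+1+1) * (1 / (1+(k:ℝ))^(1+1))) := by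
    refine Summable.mul_left _ ?_
    have := (summable_nat_add_iff 1).mpr (Real.summable_one_div_nat_pow.mpr one_lt_two)
    simpa [add_comm] using this
  refine Summable.of_norm_bounded_eventually_nat hs ?_
  filter_upwards [ev_small z] with k hk
  exact ell_bound' z r 1 k hk

lemma ell_tendsto (z : ℂ) (r : ℕ) :
    Filter.Tendsto (fun k : ℕ => (1+(k:ℂ))^r *
      (Complex.log (1 + z/(1+k)) - ell r (z/(1+k)))) Filter.atTop (nhds 0) := by
  have hs : Filter.Tendsto (fun k : ℕ => 2 * ‖z‖^(r+0+1) * (1 / (1+(k:ℝ))^(0+1)))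
      Filter.atTop (nhds 0) := by
    rw [← mul_zero (2 * ‖z‖^(r+0+1))]
    refine Filter.Tendsto.const_mul _ ?_
    have := tendsto_one_div_add_atTop_nhds_zero_nat (𝕜 := ℝ)
    simpa [add_comm] using this
  refine squeeze_zero_norm' ?_ hs
  filter_upwards [ev_small z] with k hk
  exact ell_bound' z r 0 k hk

lemma m_ne (k : ℕ) : (1 + (k:ℂ)) ≠ 0 := xk_ne (x := 1) (by simp) k

/-! ### Algebra -/

lemma BPC_add (n : ℕ) (x y : ℂ) :
    BPC n (x+y) = ∑ r ∈ Finset.range (n+1), (n.choose r : ℂ) * BPC (n-r) x * y^r := by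
  rw [BPC_eq]
  have h1 : ∀ i ∈ Finset.range (n+1), BC i * (n.choose i : ℂ) * (x+y)^(n-i)
      = ∑ r ∈ Finset.range (n+1),
        ((n.choose i * (n-i).choose r : ℕ) : ℂ) * BC i * x^(n-i-r) * y^r := by
    intro i hi
    rw [add_comm x y, add_pow, Finset.mul_sum]
    have hsub : Finset.range (n-i+1) ⊆ Finset.range (n+1) := by
      apply Finset.range_mono; omega
    rw [← Finset.sum_subset hsub]
    · refine Finset.sum_congr rfl fun r _ => ?_
      push_cast; ring
    · intro r _ hr
      have : n - i < r := by simpa using hr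
      simp [Nat.choose_eq_zero_of_lt this]
  have h2 : ∀ r ∈ Finset.range (n+1), (n.choose r : ℂ) * BPC (n-r) x * y^r
      = ∑ i ∈ Finset.range (n+1),
        ((n.choose r * (n-r).choose i : ℕ) : ℂ) * BC i * x^(n-r-i) * y^r := by
    intro r hr
    rw [BPC_eq, Finset.mul_sum, Finset.sum_mul]
    have hsub : Finset.range (n-r+1) ⊆ Finset.range (n+1) := by
      apply Finset.range_mono; omega
    rw [← Finset.sum_subset hsub]
    · refine Finset.sum_congr rfl fun i _ => ?_
      push_cast; ring
    · intro i _ hi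
      have : n - r < i := by simpa using hi
      simp [Nat.choose_eq_zero_of_lt this]
  rw [Finset.sum_congr rfl h1, Finset.sum_congr rfl h2, Finset.sum_comm]
  refine Finset.sum_congr rfl fun r hr => Finset.sum_congr rfl fun i hi => ?_
  have hr' : r ≤ n := by have := Finset.mem_range.mp hr; omega
  have hi' : i ≤ n := by have := Finset.mem_range.mp hi; omega
  have : n.choose i * (n-i).choose r = n.choose r * (n-r).choose i := by
    by_cases h : i + r ≤ n
    · have a1 := Nat.add_choose_mul_factorial_mul_factorial i r
      have b1 := Nat.choose_mul (n := n) (k := i+r) (s := i) (by omega)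
      have b2 := Nat.choose_mul (n := n) (k := i+r) (s := r) (by omega)
      rw [Nat.add_sub_cancel_left] at b1
      rw [Nat.add_sub_cancel] at b2
      rw [← b1, ← b2, Nat.choose_symm_add]
    · rw [Nat.choose_eq_zero_of_lt (show n - i < r by omega),
        Nat.choose_eq_zero_of_lt (show n - r < i by omega), mul_zero, mul_zero]
  rw [this, show n - i - r = n - r - i by omega]

lemma choose_rel (j r : ℕ) :
    (j.choose r : ℂ) / ((r:ℂ)+1) = ((j+1).choose (r+1) : ℂ) / ((j:ℂ)+1) := by
  have h := Nat.add_one_mul_choose_eq j r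
  have h' : ((j:ℂ)+1) * (j.choose r : ℂ) = ((j+1).choose (r+1) : ℂ) * ((r:ℂ)+1) := by
    exact_mod_cast h
  rw [div_eq_div_iff (j_ne r) (j_ne j), ← h']; ring

lemma BPC_sum (j : ℕ) (z x : ℂ) :
    ∑ r ∈ Finset.range (j+1), (j.choose r : ℂ) * z^(j-r) * (BPC (r+1) x / ((r:ℂ)+1))
      = (BPC (j+1) (x+z) - z^(j+1)) / ((j:ℂ)+1) := by
  rw [BPC_add, ← Finset.sum_range_reflect (n := j+1+1), Finset.sum_range_succ' (n := j+1)]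
  have h0 : BPC 0 x = 1 := by simp [BPC]
  simp only [Nat.add_sub_cancel, Nat.sub_zero, Nat.sub_self, h0, Nat.choose_self]
  rw [Nat.cast_one, one_mul, one_mul, add_sub_cancel_right, Finset.sum_div]
  refine Finset.sum_congr rfl fun r hr => ?_
  have hr' : r ≤ j := by have := Finset.mem_range.mp hr; omega
  rw [show j + 1 - (r+1) = j - r by omega, show j + 1 - (j - r) = r+1 by omega]
  have : (j+1).choose (j-r) = (j+1).choose (r+1) := by
    rw [← Nat.choose_symm (show r+1 ≤ j+1 by omega)]
    congr 1; omega
  rw [this]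
  calc _ = ((j.choose r : ℂ) / ((r:ℂ)+1)) * z^(j-r) * BPC (r+1) x := by ring
    _ = _ := by rw [choose_rel]; ring

lemma alt_sum (j : ℕ) :
    ∑ r ∈ Finset.range (j+1), (j.choose r : ℂ) * ((-1:ℂ)^r / ((r:ℂ)+1)) = 1 / ((j:ℂ)+1) := by
  have h := Int.alternating_sum_range_choose (n := j+1)
  rw [if_neg (by omega), Finset.sum_range_succ'] at h
  have h' := congrArg (fun q : ℤ => (q:ℂ)) h
  push_cast at h'
  simp only [pow_succ, pow_zero, mul_neg, mul_one, neg_mul, Finset.sum_neg_distrib,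
    Nat.choose_zero_right, Nat.cast_one] at h'
  have h2 : ∑ r ∈ Finset.range (j+1), (-1:ℂ)^r * ((j+1).choose (r+1) : ℂ) = 1 := by
    linear_combination -h'
  trans (∑ r ∈ Finset.range (j+1), (-1:ℂ)^r * ((j+1).choose (r+1) : ℂ)) / ((j:ℂ)+1)
  swap
  · rw [h2]
  rw [Finset.sum_div]
  refine Finset.sum_congr rfl fun r _ => ?_
  calc _ = ((j.choose r : ℂ) / ((r:ℂ)+1)) * (-1)^r := by ring
    _ = _ := by rw [choose_rel]; ring

/-! ### Polynomial sequences -/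

def IsPolySeq (f : ℕ → ℂ) : Prop := ∃ p : Polynomial ℂ, ∀ n : ℕ, f n = p.eval (n:ℂ)

lemma IsPolySeq.const (c : ℂ) : IsPolySeq (fun _ => c) := ⟨Polynomial.C c, by simp⟩
lemma IsPolySeq.id : IsPolySeq (fun n => (n:ℂ)) := ⟨Polynomial.X, by simp⟩
lemma IsPolySeq.add {f g : ℕ → ℂ} (hf : IsPolySeq f) (hg : IsPolySeq g) : IsPolySeq (fun n => f n + g n) := by
  obtain ⟨p, hp⟩ := hf
  obtain ⟨q, hq⟩ := hg
  exact ⟨p + q, by simp [hp, hq]⟩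
lemma IsPolySeq.sub {f g : ℕ → ℂ} (hf : IsPolySeq f) (hg : IsPolySeq g) : IsPolySeq (fun n => f n - g n) := by
  obtain ⟨p, hp⟩ := hf
  obtain ⟨q, hq⟩ := hg
  exact ⟨p - q, by simp [hp, hq]⟩
lemma IsPolySeq.mul {f g : ℕ → ℂ} (hf : IsPolySeq f) (hg : IsPolySeq g) : IsPolySeq (fun n => f n * g n) := by
  obtain ⟨p, hp⟩ := hf
  obtain ⟨q, hq⟩ := hg
  exact ⟨p * q, by simp [hp, hq]⟩
lemma IsPolySeq.pow {f : ℕ → ℂ} (hf : IsPolySeq f) (m : ℕ) : IsPolySeq (fun n => f n ^ m) := by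
  obtain ⟨p, hp⟩ := hf
  exact ⟨p ^ m, by simp [hp]⟩
lemma IsPolySeq.sum {ι : Type} (s : Finset ι) {f : ι → ℕ → ℂ} (hf : ∀ i ∈ s, IsPolySeq (f i)) :
    IsPolySeq (fun n => ∑ i ∈ s, f i n) := by
  classical
  induction s using Finset.induction_on with
  | empty => simpa using IsPolySeq.const 0
  | insert a s ha ih =>
    simp_rw [Finset.sum_insert ha]
    exact (hf a (by simp)).add (ih fun i hi => hf i (by simp [hi]))

lemma IsPolySeq.powsum (m : ℕ) : IsPolySeq (fun n => ∑ k ∈ Finset.range n, (k:ℂ)^m) := by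
  have : ∀ n : ℕ, ∑ k ∈ Finset.range n, (k:ℂ)^m = ∑ i ∈ Finset.range (m + 1),
      (BC i * ((m + 1).choose i : ℂ) / ((m:ℂ)+1)) * (n : ℂ) ^ (m + 1 - i) := by
    intro n
    have := congrArg (fun q : ℚ => (q:ℂ)) (sum_range_pow n m)
    push_cast at this
    rw [this]
    refine Finset.sum_congr rfl fun i _ => ?_
    rw [BC]; ring
  simp_rw [this]
  exact IsPolySeq.sum _ fun i _ => (IsPolySeq.const _).mul (IsPolySeq.id.pow _)

lemma IsPolySeq.psum {f : ℕ → ℂ} (hf : IsPolySeq f) : IsPolySeq (fun n => ∑ k ∈ Finset.range n, f k) := by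
  obtain ⟨p, hp⟩ := hf
  simp_rw [hp, Polynomial.eval_eq_sum_range]
  simp_rw [Finset.sum_comm (s := Finset.range _) (t := Finset.range (p.natDegree + 1)),
    ← Finset.mul_sum]
  exact IsPolySeq.sum _ fun i _ => (IsPolySeq.const _).mul (IsPolySeq.powsum _)

lemma IsPolySeq.eq_of_tendsto {f : ℕ → ℂ} (hf : IsPolySeq f) {a : ℂ}
    (h : Filter.Tendsto f Filter.atTop (nhds a)) : f 0 = a := by
  obtain ⟨p, hp⟩ := hf
  by_cases hd : 0 < p.degree
  · exfalso
    have h1 := p.tendsto_norm_atTop hd (l := Filter.atTop) (z := fun n : ℕ => (n:ℂ))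
      (by simpa using tendsto_natCast_atTop_atTop (R := ℝ))
    simp_rw [← hp] at h1
    exact not_tendsto_nhds_of_tendsto_atTop h1 _ h.norm
  · have h2 := Polynomial.eq_C_of_degree_le_zero (not_lt.mp hd)
    have h3 : ∀ n, f n = f 0 := by
      intro n; rw [hp, hp, h2]; simp
    have : f = fun _ => f 0 := funext h3
    rw [this] at h
    exact tendsto_nhds_unique tendsto_const_nhds h

/-! ### Final assembly -/

def gg (j : ℕ) (z : ℂ) (k : ℕ) : ℂ :=
  -((z+(k:ℂ)+1)^j * Complex.log (1 + z/((k:ℂ)+1)))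
    + ∑ r ∈ Finset.range (j+1), (j.choose r : ℂ) * z^(j-r) *
        ∑ l ∈ Finset.Icc 1 (r+1), ((-1:ℂ)^(l-1) * z^l / l) * ((k:ℂ)+1)^((r:ℤ)-l)

def lam (z : ℂ) (r : ℕ) (m : ℂ) : ℂ :=
  ∑ l ∈ Finset.Icc 1 r, ((-1:ℂ)^(l-1) * z^l / l) * m^(r-l)

lemma lam_eq (z : ℂ) (r : ℕ) (m : ℂ) (hm : m ≠ 0) : lam z r m = m^r * ell r (z/m) := by
  rw [lam, ell, Finset.mul_sum]
  refine Finset.sum_congr rfl fun l hl => ?_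
  have hl' : l ≤ r := (Finset.mem_Icc.mp hl).2
  rw [pow_sub₀ m hm hl', div_pow]
  ring

lemma zsum_eq (z : ℂ) (n r : ℕ) (m : ℂ) (hm : m ≠ 0) :
    ∑ l ∈ Finset.Icc 1 n, ((-1:ℂ)^(l-1) * z^l / l) * m^((r:ℤ)-l) = m^r * ell n (z/m) := by
  rw [ell, Finset.mul_sum]
  refine Finset.sum_congr rfl fun l hl => ?_
  rw [zpow_sub₀ hm, zpow_natCast, zpow_natCast, div_pow]
  ring

lemma gg_eq1 (j : ℕ) (z : ℂ) (k : ℕ) :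
    gg j z k = -∑ r ∈ Finset.range (j+1), (j.choose r : ℂ) * z^(j-r) *
      ((1+(k:ℂ))^r * (Complex.log (1 + z/(1+k)) - ell (r+1) (z/(1+k)))) := by
  rw [gg, add_comm (k:ℂ) 1, show z + (k:ℂ) + 1 = (1 + k) + z by ring, add_pow, Finset.sum_mul,
    ← Finset.sum_neg_distrib, ← Finset.sum_neg_distrib, ← Finset.sum_add_distrib]
  refine Finset.sum_congr rfl fun r _ => ?_
  rw [zsum_eq z _ r _ (m_ne k)]
  ring

lemma gg_summable (j : ℕ) (z : ℂ) : Summable (gg j z) := by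
  have : gg j z = fun k : ℕ => -∑ r ∈ Finset.range (j+1), (j.choose r : ℂ) * z^(j-r) *
      ((1+(k:ℂ))^r * (Complex.log (1 + z/(1+k)) - ell (r+1) (z/(1+k)))) :=
    funext (gg_eq1 j z)
  rw [this]
  exact (summable_sum fun r _ => (ell_summable z r).mul_left _).neg

lemma log_split (z : ℂ) (hz : -1 < z.re) (k : ℕ) :
    Complex.log (1 + z/(1+k)) = Complex.log (z+1+k) - Complex.log (1+k) := by
  have hk : (0:ℝ) ≤ k := by positivity
  rw [← log_div_re (by simp; linarith) (by simp; linarith)]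
  congr 1
  have := m_ne k
  field_simp
  ring

lemma gg_eq2 (j : ℕ) (z : ℂ) (hz : -1 < z.re) (k : ℕ) :
    gg j z k = -((z+1+k)^j * Complex.log (z+1+k))
      + ∑ r ∈ Finset.range (j+1), (j.choose r : ℂ) * z^(j-r) * ((1+(k:ℂ))^r * Complex.log (1+k))
      + ∑ r ∈ Finset.range (j+1), (j.choose r : ℂ) * z^(j-r) * lam z r (1+k)
      + z^(j+1) / ((j:ℂ)+1) * ((k:ℂ)+1)⁻¹ := by
  have hm := m_ne k
  have h1 : (z+1+k)^j = ∑ r ∈ Finset.range (j+1), (j.choose r : ℂ) * z^(j-r) * (1+(k:ℂ))^r := by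
    rw [show z+1+k = (1 + (k:ℂ)) + z by ring, add_pow]
    exact Finset.sum_congr rfl fun r _ => by ring
  have h2 : ∑ r ∈ Finset.range (j+1), (j.choose r : ℂ) * z^(j-r) * ((1+(k:ℂ))^r * Complex.log (1+k))
      = (z+1+k)^j * Complex.log (1+k) := by
    rw [h1, Finset.sum_mul]
    exact Finset.sum_congr rfl fun r _ => by ring
  have h3 : z^(j+1) / ((j:ℂ)+1) * ((k:ℂ)+1)⁻¹ = ∑ r ∈ Finset.range (j+1),
      (j.choose r : ℂ) * z^(j-r) * ((-1:ℂ)^r * z^(r+1) / ((r:ℂ)+1) * (1+(k:ℂ))⁻¹) := by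
    have := alt_sum j
    rw [div_eq_mul_one_div, ← this, Finset.mul_sum, Finset.sum_mul]
    refine Finset.sum_congr rfl fun r hr => ?_
    have hr' : r ≤ j := by have := Finset.mem_range.mp hr; omega
    rw [show z^(j+1) = z^(j-r) * z^(r+1) by rw [← pow_add]; congr 1; omega]
    ring
  have h4 : ∀ r : ℕ, ∑ l ∈ Finset.Icc 1 (r+1), ((-1:ℂ)^(l-1) * z^l / l) * (1+(k:ℂ))^((r:ℤ)-l)
      = lam z r (1+k) + (-1:ℂ)^r * z^(r+1) / ((r:ℂ)+1) * (1+(k:ℂ))⁻¹ := by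
    intro r
    rw [Finset.sum_Icc_succ_top (by omega), zsum_eq z r r _ hm, ← lam_eq z r _ hm]
    congr 1
    simp
  rw [h2, h3, gg, add_comm (k:ℂ) 1, log_split z hz, show z + (k:ℂ) + 1 = z+1+k by ring]
  simp_rw [h4, mul_add, Finset.sum_add_distrib]
  ring

def VV (j : ℕ) (z : ℂ) (N : ℕ) : ℂ :=
  (1/((j:ℂ)+1)) * ∑ r ∈ Finset.range (j+2), ((j+1).choose r : ℂ) * BPC (j+1-r) z *
    ((1+(N:ℂ))^r * (Complex.log (1 + z/(1+N)) - ell r (z/(1+N))))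

lemma VV_tendsto (j : ℕ) (z : ℂ) :
    Filter.Tendsto (VV j z) Filter.atTop (nhds 0) := by
  have : (0:ℂ) = (1/((j:ℂ)+1)) * ∑ r ∈ Finset.range (j+2),
      ((j+1).choose r : ℂ) * BPC (j+1-r) z * 0 := by simp
  rw [this]
  exact (tendsto_finsetSum _ fun r _ => (ell_tendsto z r).const_mul _).const_mul _

def PP (j : ℕ) (z : ℂ) (N : ℕ) : ℂ :=
  Pj j (z+1+N) - ∑ r ∈ Finset.range (j+1), (j.choose r : ℂ) * z^(j-r) * Pj r (1+N)
  + (1/((j:ℂ)+1)) * ∑ r ∈ Finset.Icc 1 (j+1), ((j+1).choose r : ℂ) * BPC (j+1-r) z * lam z r (1+N)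
  - ∑ k ∈ Finset.range N, ∑ r ∈ Finset.range (j+1), (j.choose r : ℂ) * z^(j-r) * lam z r (1+k)

lemma PP_zero (j : ℕ) (z : ℂ) : PP j z 0 = Qj j z := by
  rw [PP, Qj, ← Finset.sum_range_reflect]
  simp only [lam, Nat.cast_zero, add_zero, Finset.range_zero, Finset.sum_empty, sub_zero, one_pow,
    mul_one]
  congr 2
  refine Finset.sum_congr rfl fun r hr => ?_
  have hr' : r ≤ j := by have := Finset.mem_range.mp hr; omega
  rw [show j + 1 - 1 - r = j - r by omega, Nat.choose_symm hr', Nat.sub_sub_self hr']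

lemma isPolySeq_lam (z : ℂ) (r : ℕ) : IsPolySeq (fun N => lam z r (1+N)) := by
  unfold lam
  exact IsPolySeq.sum _ fun l _ => (IsPolySeq.const _).mul
    (((IsPolySeq.const 1).add IsPolySeq.id).pow _)

lemma isPolySeq_Pj (j : ℕ) (x : ℂ) : IsPolySeq (fun N => Pj j (x+N)) := by
  unfold Pj
  exact IsPolySeq.sum _ fun l _ => (IsPolySeq.const _).mul
    (((IsPolySeq.const x).add IsPolySeq.id).pow _)

lemma isPolySeq_PP (j : ℕ) (z : ℂ) : IsPolySeq (PP j z) := by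
  unfold PP
  refine (((isPolySeq_Pj j (z+1)).sub ?_).add ((IsPolySeq.const _).mul ?_)).sub
    (IsPolySeq.psum (f := fun k : ℕ => ∑ r ∈ Finset.range (j+1),
      (j.choose r : ℂ) * z^(j-r) * lam z r (1+k)) ?_)
  · exact IsPolySeq.sum _ fun r _ => (IsPolySeq.const _).mul (isPolySeq_Pj r 1)
  · exact IsPolySeq.sum _ fun r _ => (IsPolySeq.const _).mul (isPolySeq_lam z r)
  · exact IsPolySeq.sum _ fun r _ => (IsPolySeq.const _).mul (isPolySeq_lam z r)

lemma PP_VV (j : ℕ) (z : ℂ) (hz : -1 < z.re) (N : ℕ) :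
    LL j (z+1+N) - ∑ r ∈ Finset.range (j+1), (j.choose r : ℂ) * z^(j-r) * LL r (1+N)
      - ∑ k ∈ Finset.range N, ∑ r ∈ Finset.range (j+1), (j.choose r : ℂ) * z^(j-r) * lam z r (1+k)
    = PP j z N + VV j z N + z^(j+1) / ((j:ℂ)+1) * Complex.log (1+N) := by
  have hm := m_ne N
  have h1 : VV j z N = BPC (j+1) (z+1+N) / ((j:ℂ)+1) * (Complex.log (z+1+N) - Complex.log (1+N))
      - (1/((j:ℂ)+1)) * ∑ r ∈ Finset.Icc 1 (j+1),
        ((j+1).choose r : ℂ) * BPC (j+1-r) z * lam z r (1+N) := by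
    have hI : ∑ r ∈ Finset.Icc 1 (j+1), ((j+1).choose r : ℂ) * BPC (j+1-r) z * lam z r (1+N)
        = ∑ r ∈ Finset.range (j+2), ((j+1).choose r : ℂ) * BPC (j+1-r) z * lam z r (1+N) := by
      refine Finset.sum_subset (fun r hr => ?_) fun r hr hr' => ?_
      · simp at hr ⊢; omega
      · have : r = 0 := by simp at hr hr'; omega
        subst this
        simp [lam]
    have e : ∀ S L T : ℂ, S / ((j:ℂ)+1) * L - 1/((j:ℂ)+1) * T = 1/((j:ℂ)+1) * (S * L - T) := by
      intros; ring
    rw [hI, ← log_split z hz, add_assoc z 1, BPC_add, VV, e, Finset.sum_mul,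
      ← Finset.sum_sub_distrib]
    congr 1
    refine Finset.sum_congr rfl fun r _ => ?_
    rw [lam_eq z r _ hm]
    ring
  have h2 : ∑ r ∈ Finset.range (j+1), (j.choose r : ℂ) * z^(j-r) * LL r (1+N)
      = ∑ r ∈ Finset.range (j+1), (j.choose r : ℂ) * z^(j-r) * Pj r (1+N)
        + (BPC (j+1) (z+1+N) - z^(j+1)) / ((j:ℂ)+1) * Complex.log (1+N) := by
    rw [show z+1+N = (1+(N:ℂ)) + z by ring, ← BPC_sum, Finset.sum_mul, ← Finset.sum_add_distrib]
    refine Finset.sum_congr rfl fun r _ => ?_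
    rw [LL]; ring
  rw [h1, h2, PP, LL]
  ring

lemma harm_tendsto : Filter.Tendsto
    (fun N : ℕ => ∑ k ∈ Finset.range N, ((k:ℂ)+1)⁻¹ - Complex.log (1+N)) Filter.atTop
    (nhds (Real.eulerMascheroniConstant : ℂ)) := by
  have h := (Complex.continuous_ofReal.tendsto _).comp Real.tendsto_harmonic_sub_log_add_one
  refine h.congr fun N => ?_
  have : (1:ℂ) + N = (((N:ℝ) + 1 : ℝ) : ℂ) := by push_cast; ring
  rw [this, ← Complex.ofReal_log (by positivity)]
  simp [harmonic]

theorem main_aux (j : ℕ) (z : ℂ) (hz : -1 < z.re) :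
    Kj j z =
      Qj j z + (∑ r ∈ Finset.range j, (j.choose r : ℂ) * z^(j-r) * zetaD (-(r:ℂ)))
      - z^(j+1) / ((j:ℂ)+1) * (Real.eulerMascheroniConstant : ℂ)
      + ∑' k : ℕ, gg j z k := by
  have hK := Kj_tendsto j z hz
  have hZ : ∀ r : ℕ, Filter.Tendsto
      (fun N : ℕ => LL r (1+N) - ∑ k ∈ Finset.range N, (1+(k:ℂ))^r * Complex.log (1+k))
      Filter.atTop (nhds (zetaD (-(r:ℂ)))) := fun r => by
    have := T_tendsto r 1 _ (zetaD_eq r)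
    simpa using this
  have hZs := tendsto_finsetSum (Finset.range (j+1)) fun r _ =>
    (hZ r).const_mul ((j.choose r : ℂ) * z^(j-r))
  have hg := (gg_summable j z).hasSum.tendsto_sum_nat
  have hlim := (((hK.sub hZs).sub hg).sub (VV_tendsto j z)).add
    (harm_tendsto.const_mul (z^(j+1) / ((j:ℂ)+1)))
  have hP : Filter.Tendsto (PP j z) Filter.atTop
      (nhds (Kj j z + zetaD (-(j:ℂ))
        - ∑ c ∈ Finset.range (j+1), (j.choose c : ℂ) * z^(j-c) * zetaD (-(c:ℂ))
        - ∑' b : ℕ, gg j z b - 0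
        + z^(j+1) / ((j:ℂ)+1) * (Real.eulerMascheroniConstant : ℂ))) := by
    refine hlim.congr fun N => ?_
    have e1 := PP_VV j z hz N
    have e2 : ∑ k ∈ Finset.range N, gg j z k = _ :=
      Finset.sum_congr rfl fun k _ => gg_eq2 j z hz k
    rw [Finset.sum_add_distrib, Finset.sum_add_distrib, Finset.sum_add_distrib,
      Finset.sum_neg_distrib, ← Finset.mul_sum,
      Finset.sum_comm (f := fun (k r : ℕ) => (j.choose r : ℂ) * z^(j-r) *
        ((1+(k:ℂ))^r * Complex.log (1+k)))] at e2
    simp_rw [← Finset.mul_sum (s := Finset.range N)] at e2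
    simp_rw [mul_sub, Finset.sum_sub_distrib]
    linear_combination e1 - e2
  have := (isPolySeq_PP j z).eq_of_tendsto hP
  rw [PP_zero, Finset.sum_range_succ] at this
  simp only [Nat.choose_self, Nat.sub_self, pow_zero, Nat.cast_one, one_mul, mul_one] at this
  linear_combination -this

/-- The "good" representation of `K_j(z)` for `Re z > −1`:
`K_j(z) = Q_j(z) + Σ_{r=0}^{j−1} C(j,r)·z^{j−r}·ζ'(−r) − (z^{j+1}/(j+1))·γ
+ Σ_{k≥1} [−(z+k)^j·log(1+z/k) + Σ_{r=0}^{j} C(j,r)·z^{j−r}·Σ_{l=1}^{r+1}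
((−1)^{l−1} z^l/l)·k^{r−l}]`, the series converging absolutely. -/
theorem Kj_good_representation (j : ℕ) (z : ℂ) (hz : -1 < z.re) :
    Kj j z =
      Qj j z + (∑ r ∈ Finset.range j, (j.choose r : ℂ) * z^(j-r) * zetaD (-(r:ℂ)))
      - z^(j+1) / ((j:ℂ)+1) * (Real.eulerMascheroniConstant : ℂ)
      + ∑' k : ℕ,
          (-((z+(k:ℂ)+1)^j * Complex.log (1 + z/((k:ℂ)+1)))
            + ∑ r ∈ Finset.range (j+1), (j.choose r : ℂ) * z^(j-r) *
                ∑ l ∈ Finset.Icc 1 (r+1),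
                  ((-1:ℂ)^(l-1) * z^l / l) * ((k:ℂ)+1)^((r:ℤ)-l)) ∧
    Summable (fun k : ℕ =>
      ‖-((z+(k:ℂ)+1)^j * Complex.log (1 + z/((k:ℂ)+1)))
        + ∑ r ∈ Finset.range (j+1), (j.choose r : ℂ) * z^(j-r) *
            ∑ l ∈ Finset.Icc 1 (r+1),
              ((-1:ℂ)^(l-1) * z^l / l) * ((k:ℂ)+1)^((r:ℤ)-l)‖) := by
  exact ⟨main_aux j z hz, (gg_summable j z).norm⟩

end
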